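/- Let Ω ⊆ ℝ^D be a connected open set and let f : Ω → ℝ be a real analytic function that is not identically zero on Ω. Then for every compact set Δ ⊂ Ω, the function x ↦ |log|f(x)|| is Lebesgue integrable on Δ; in particular ∫_Δ |log|f(x)|| dx < ∞. -/

import Mathlib

open MeasureTheory

lemma aux_sublevel (k : ℕ) : ∀ (G : ℕ → ℝ → ℝ) (a b c δ : ℝ), 0 < c → 0 < δ →
    (∀ i, ∀ t ∈ Set.Icc a b, HasDerivAt (G i) (G (i+1) t) t) →
    (∀ t ∈ Set.Icc a b, c ≤ |G k t|) →
    volume {t | t ∈ Set.Icc a b ∧ |G 0 t| < c * (δ/2)^k} ≤ ENNReal.ofReal (2*(2^k-1)*δ) := by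
  induction k with
  | zero =>
    intro G a b c δ hc hδ hG hk
    have : {t | t ∈ Set.Icc a b ∧ |G 0 t| < c * (δ/2)^0} = ∅ := by
      ext t
      simp only [Set.mem_ofPred_eq, Set.mem_empty_iff_false, iff_false, not_and, not_lt, pow_zero,
        mul_one]
      exact hk t
    rw [this]; simp
  | succ k ih =>
    intro G a b c δ hc hδ hG hk
    rcases lt_or_ge b a with hab | hab
    · simp [Set.Icc_eq_empty (not_le.mpr hab)]
    have hcont : ContinuousOn (fun t => |G k t|) (Set.Icc a b) :=
      fun t ht => ((hG k t ht).continuousAt.abs).continuousWithinAt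
    obtain ⟨p, hp, hmin⟩ := isCompact_Icc.exists_isMinOn (Set.nonempty_Icc.mpr hab) hcont
    have mvt : ∀ s ∈ Set.Icc a b, ∀ t ∈ Set.Icc a b, s < t → c * (t - s) ≤ |G k t - G k s| := by
      intro s hs t ht hst
      have hsub : Set.Icc s t ⊆ Set.Icc a b := Set.Icc_subset_Icc hs.1 ht.2
      obtain ⟨ξ, hξ, he⟩ := exists_hasDerivAt_eq_slope (G k) (G (k+1)) hst
        (fun u hu => (hG k u (hsub hu)).continuousAt.continuousWithinAt)
        (fun u hu => hG k u (hsub (Set.Ioo_subset_Icc_self hu)))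
      have h1 := hk ξ (hsub (Set.Ioo_subset_Icc_self hξ))
      have h2 : 0 < t - s := sub_pos.mpr hst
      rw [he, abs_div, abs_of_pos h2, le_div_iff₀ h2] at h1
      exact h1
    have low : ∀ t ∈ Set.Icc a b, c * |t - p| ≤ 2 * |G k t| := by
      intro t ht
      have h1 : |G k p| ≤ |G k t| := hmin ht
      have h2 : c * |t - p| ≤ |G k t - G k p| := by
        rcases lt_trichotomy t p with h | h | h
        · rw [abs_sub_comm, abs_of_pos (sub_pos.mpr h), abs_sub_comm (G k t)]
          exact mvt t ht p hp h
        · simp [h]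
        · rw [abs_of_pos (sub_pos.mpr h)]
          exact mvt p hp t ht h
      have h3 := abs_sub (G k t) (G k p)
      linarith
    have A1 := ih G a (p - δ) (c * (δ/2)) δ (by positivity) hδ
      (fun i t ht => hG i t ⟨ht.1, by linarith [ht.2, hp.2]⟩)
      (fun t ht => by
        have h := low t ⟨ht.1, by linarith [ht.2, hp.2]⟩
        have h2 : δ ≤ |t - p| := by rw [abs_sub_comm]; exact le_trans (by linarith [ht.2]) (le_abs_self _)
        nlinarith)
    have A2 := ih G (p + δ) b (c * (δ/2)) δ (by positivity) hδ
      (fun i t ht => hG i t ⟨by linarith [ht.1, hp.1], ht.2⟩)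
      (fun t ht => by
        have h := low t ⟨by linarith [ht.1, hp.1], ht.2⟩
        have h2 : δ ≤ |t - p| := le_trans (by linarith [ht.1]) (le_abs_self _)
        nlinarith)
    have e : c * (δ/2)^(k+1) = c * (δ/2) * (δ/2)^k := by ring
    rw [e]
    have hsub : {t | t ∈ Set.Icc a b ∧ |G 0 t| < c * (δ/2) * (δ/2)^k} ⊆
        Set.Icc (p - δ) (p + δ) ∪ ({t | t ∈ Set.Icc a (p-δ) ∧ |G 0 t| < c * (δ/2) * (δ/2)^k} ∪
        {t | t ∈ Set.Icc (p+δ) b ∧ |G 0 t| < c * (δ/2) * (δ/2)^k}) := by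
      rintro t ⟨ht, ht2⟩
      rcases le_total t (p - δ) with h | h
      · exact Or.inr (Or.inl ⟨⟨ht.1, h⟩, ht2⟩)
      · rcases le_total t (p + δ) with h' | h'
        · exact Or.inl ⟨h, h'⟩
        · exact Or.inr (Or.inr ⟨⟨h', ht.2⟩, ht2⟩)
    have hk1 : (0:ℝ) ≤ 2^k - 1 := sub_nonneg.mpr (one_le_pow₀ (by norm_num))
    calc _ ≤ _ := measure_mono hsub
      _ ≤ _ := (measure_union_le _ _).trans (add_le_add le_rfl (measure_union_le _ _))
      _ ≤ ENNReal.ofReal (2*δ) + (ENNReal.ofReal (2*(2^k-1)*δ) + ENNReal.ofReal (2*(2^k-1)*δ)) := by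
        refine add_le_add ?_ (add_le_add A1 A2)
        rw [Real.volume_Icc]
        exact ENNReal.ofReal_le_ofReal (by linarith)
      _ = _ := by
        rw [← ENNReal.ofReal_add (by positivity) (by positivity),
          ← ENNReal.ofReal_add (by positivity) (by positivity)]
        congr 1; ring

lemma aux_fubini {D : ℕ} (E B : Set (EuclideanSpace ℝ (Fin D))) (hE : MeasurableSet E)
    (hB : MeasurableSet B) (v : EuclideanSpace ℝ (Fin D)) (L : ℝ) (m : ENNReal)
    (h1 : ∀ x, volume {t | t ∈ Set.Icc 0 L ∧ x + t • v ∈ E} ≤ m)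
    (h2 : ∀ x, ∀ t ∈ Set.Icc 0 L, x + t • v ∈ E → x ∈ B) :
    ENNReal.ofReal L * volume E ≤ m * volume B := by
  have hmeas : Measurable (fun q : ℝ × EuclideanSpace ℝ (Fin D) => q.2 + q.1 • v) := by fun_prop
  have hind : Measurable (fun q : ℝ × EuclideanSpace ℝ (Fin D) =>
      E.indicator (fun _ => (1:ENNReal)) (q.2 + q.1 • v)) :=
    (measurable_const.indicator hE).comp hmeas
  have i1 : ∀ t : ℝ, ∫⁻ x, E.indicator (fun _ => (1:ENNReal)) (x + t • v) = volume E := by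
    intro t
    rw [lintegral_add_right_eq_self (fun x => E.indicator (fun _ => (1:ENNReal)) x) (t • v)]
    simp [lintegral_indicator hE]
  have i2 : ∀ x, ∫⁻ t in Set.Icc 0 L, E.indicator (fun _ => (1:ENNReal)) (x + t • v)
      ≤ B.indicator (fun _ => m) x := by
    intro x
    have hm : MeasurableSet {t : ℝ | x + t • v ∈ E} := by
      have : Measurable (fun t : ℝ => x + t • v) := by fun_prop
      exact this hE
    have : (fun t : ℝ => E.indicator (fun _ => (1:ENNReal)) (x + t • v)) =
        {t : ℝ | x + t • v ∈ E}.indicator (fun _ => 1) := rfl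
    rw [this, lintegral_indicator hm]
    simp only [lintegral_const, one_mul, MeasurableSet.univ, Measure.restrict_apply,
      Set.univ_inter]
    rw [Measure.restrict_apply hm]
    by_cases hx : x ∈ B
    · rw [Set.indicator_of_mem hx]
      refine le_trans (measure_mono ?_) (h1 x)
      rintro t ⟨ha, hb⟩; exact ⟨hb, ha⟩
    · have : {t : ℝ | x + t • v ∈ E} ∩ Set.Icc 0 L = ∅ := by
        ext t
        simp only [Set.mem_inter_iff, Set.mem_ofPred_eq, Set.mem_empty_iff_false, iff_false]
        rintro ⟨ha, hb⟩; exact hx (h2 x t hb ha)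
      rw [this]; simp
  calc ENNReal.ofReal L * volume E
      = ∫⁻ t in Set.Icc 0 L, ∫⁻ x, E.indicator (fun _ => (1:ENNReal)) (x + t • v) := by
        simp only [i1, lintegral_const]
        simp [mul_comm]
    _ = ∫⁻ x, ∫⁻ t in Set.Icc 0 L, E.indicator (fun _ => (1:ENNReal)) (x + t • v) :=
        lintegral_lintegral_swap hind.aemeasurable
    _ ≤ ∫⁻ x, B.indicator (fun _ => m) x := lintegral_mono i2
    _ = _ := by rw [lintegral_indicator hB]; simp

/-- Iterated directional derivatives of `f` along `v`. -/
noncomputable def auxDir {D : ℕ} (f : EuclideanSpace ℝ (Fin D) → ℝ)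
    (v : EuclideanSpace ℝ (Fin D)) : ℕ → EuclideanSpace ℝ (Fin D) → ℝ
  | 0 => f
  | (n+1) => fun x => fderiv ℝ (auxDir f v n) x v

lemma auxDir_analytic {D : ℕ} {Ω : Set (EuclideanSpace ℝ (Fin D))}
    {f : EuclideanSpace ℝ (Fin D) → ℝ} (hf : AnalyticOnNhd ℝ f Ω)
    (v : EuclideanSpace ℝ (Fin D)) (n : ℕ) : AnalyticOnNhd ℝ (auxDir f v n) Ω := by
  induction n with
  | zero => exact hf
  | succ n ih =>
    intro x hx
    exact ((ContinuousLinearMap.apply ℝ ℝ v).analyticAt _).comp (ih.fderiv x hx)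

lemma auxDir_hasDerivAt {D : ℕ} {Ω : Set (EuclideanSpace ℝ (Fin D))}
    {f : EuclideanSpace ℝ (Fin D) → ℝ} (hf : AnalyticOnNhd ℝ f Ω)
    (v : EuclideanSpace ℝ (Fin D)) (n : ℕ) (x : EuclideanSpace ℝ (Fin D)) (t : ℝ)
    (hx : x + t • v ∈ Ω) :
    HasDerivAt (fun s : ℝ => auxDir f v n (x + s • v)) (auxDir f v (n+1) (x + t • v)) t := by
  have h1 := (auxDir_analytic hf v n _ hx).differentiableAt.hasFDerivAt
  have h2 : HasDerivAt (fun s : ℝ => x + s • v) v t := by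
    simpa using ((hasDerivAt_id t).smul_const v).const_add x
  exact h1.comp_hasDerivAt t h2

lemma auxDir_exists {D : ℕ} {Ω : Set (EuclideanSpace ℝ (Fin D))}
    (hΩopen : IsOpen Ω) (hΩconn : IsConnected Ω)
    {f : EuclideanSpace ℝ (Fin D) → ℝ} (hf : AnalyticOnNhd ℝ f Ω)
    (hne : ∃ x ∈ Ω, f x ≠ 0) (x₀ : EuclideanSpace ℝ (Fin D)) (hx₀ : x₀ ∈ Ω) :
    ∃ v k, auxDir f v k x₀ ≠ 0 := by
  obtain ⟨R, hR, hball⟩ := Metric.isOpen_iff.mp hΩopen x₀ hx₀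
  have hy : ∃ y ∈ Metric.ball x₀ R, f y ≠ 0 := by
    by_contra! h
    obtain ⟨z, hz, hz'⟩ := hne
    refine hz' (hf.eqOn_zero_of_preconnected_of_eventuallyEq_zero hΩconn.isPreconnected hx₀ ?_ hz)
    filter_upwards [Metric.ball_mem_nhds x₀ hR] with y hy using h y hy
  obtain ⟨y, hy, hfy⟩ := hy
  refine ⟨y - x₀, ?_⟩
  by_contra! hz
  set v := y - x₀ with hv
  have hseg : ∀ t ∈ Set.Icc (0:ℝ) 1, x₀ + t • v ∈ Ω := by
    intro t ht
    apply hball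
    have hvR : ‖v‖ < R := by rw [hv, ← dist_eq_norm]; exact hy
    rw [Metric.mem_ball, dist_eq_norm, add_sub_cancel_left, norm_smul, Real.norm_eq_abs,
      abs_of_nonneg ht.1]
    nlinarith [ht.2, norm_nonneg v]
  set g : ℝ → ℝ := fun t => f (x₀ + t • v) with hg
  have hga : AnalyticOnNhd ℝ g (Set.Icc 0 1) := by
    intro t ht
    have : AnalyticAt ℝ (fun s : ℝ => x₀ + s • v) t := by fun_prop
    exact AnalyticAt.fun_comp (hf _ (hseg t ht)) this
  have h0 : (0:ℝ) ∈ Set.Icc (0:ℝ) 1 := by simp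
  have hev : ∀ᶠ t in nhds (0:ℝ), x₀ + t • v ∈ Ω := by
    have hc : ContinuousAt (fun s : ℝ => x₀ + s • v) 0 := by fun_prop
    exact hc.eventually_mem (by simpa using hΩopen.mem_nhds hx₀)
  have hit : ∀ i, ∀ᶠ t in nhds (0:ℝ), iteratedDeriv i g t = auxDir f v i (x₀ + t • v) := by
    intro i
    induction i with
    | zero => simp [hg, auxDir]
    | succ i ih =>
      filter_upwards [ih.eventually_nhds, hev] with t ht ht2
      rw [iteratedDeriv_succ]
      rw [Filter.EventuallyEq.deriv_eq ht]
      exact (auxDir_hasDerivAt hf v i x₀ t ht2).deriv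
  have htop : analyticOrderAt g 0 = ⊤ := by
    rw [ENat.eq_top_iff_forall_ge]
    intro n
    rw [natCast_le_analyticOrderAt_iff_iteratedDeriv_eq_zero (hga 0 h0)]
    intro i _
    rw [(hit i).self_of_nhds]
    simpa using hz i
  rw [analyticOrderAt_eq_top] at htop
  have := hga.eqOn_zero_of_preconnected_of_eventuallyEq_zero isPreconnected_Icc h0 htop
    (show (1:ℝ) ∈ Set.Icc (0:ℝ) 1 by simp)
  apply hfy
  simpa [hg, hv] using this

lemma aux_local {D : ℕ} {Ω : Set (EuclideanSpace ℝ (Fin D))}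
    (hΩopen : IsOpen Ω) (hΩconn : IsConnected Ω)
    {f : EuclideanSpace ℝ (Fin D) → ℝ} (hf : AnalyticOnNhd ℝ f Ω)
    (hne : ∃ x ∈ Ω, f x ≠ 0) (x₀ : EuclideanSpace ℝ (Fin D)) (hx₀ : x₀ ∈ Ω) :
    IntegrableAtFilter (fun x => |Real.log (|f x|)|) (nhds x₀) volume := by
  obtain ⟨v, k, hvk⟩ := auxDir_exists hΩopen hΩconn hf hne x₀ hx₀
  obtain ⟨c, hc, hck⟩ : ∃ c, 0 < c ∧ c < |auxDir f v k x₀| := exists_between (abs_pos.mpr hvk)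
  have hfc : ContinuousAt (fun x => |f x|) x₀ := (hf x₀ hx₀).continuousAt.abs
  have hev : ∀ᶠ x in nhds x₀, x ∈ Ω ∧ c < |auxDir f v k x| ∧ |f x| < |f x₀| + 1 :=
    (hΩopen.eventually_mem hx₀).and
      (((auxDir_analytic hf v k x₀ hx₀).continuousAt.abs.eventually_const_lt hck).and
        (hfc.eventually_lt_const (by linarith)))
  obtain ⟨R, hR, hball⟩ := Metric.eventually_nhds_iff_ball.mp hev
  set M := |f x₀| + 1 with hM
  have hM1 : 1 ≤ M := by simp [hM]
  set A := Metric.ball x₀ (R/3) with hA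
  have hAΩ : A ⊆ Ω := fun x hx => (hball x (Metric.ball_subset_ball (by linarith) hx)).1
  set L := R / (3 * (‖v‖ + 1)) with hL
  have hLpos : 0 < L := by positivity
  have hLv : L * ‖v‖ ≤ R / 3 := by
    rw [hL, div_mul_eq_mul_div, div_le_div_iff₀ (by positivity) (by norm_num)]
    nlinarith [norm_nonneg v]
  have hfcont : ContinuousOn f A := hf.continuousOn.mono hAΩ
  have hEm : ∀ η : ℝ, MeasurableSet {x | x ∈ A ∧ |f x| < η} := by
    intro η
    exact (hfcont.abs.isOpen_inter_preimage Metric.isOpen_ball isOpen_Iio).measurableSet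
  have hstep : ∀ x, ∀ t ∈ Set.Icc (0:ℝ) L, x + t • v ∈ A → dist x x₀ < 2 * R / 3 := by
    intro x t ht hx
    have h1 : dist x (x + t • v) ≤ R / 3 := by
      rw [dist_eq_norm, sub_add_cancel_left, norm_neg, norm_smul, Real.norm_eq_abs,
        abs_of_nonneg ht.1]
      exact le_trans (mul_le_mul_of_nonneg_right ht.2 (norm_nonneg _)) hLv
    have h2 : dist (x + t • v) x₀ < R / 3 := hx
    have := dist_triangle x (x + t • v) x₀
    linarith
  set K : ENNReal := (ENNReal.ofReal L)⁻¹ * volume (Metric.ball x₀ (2 * R / 3)) with hK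
  have hKtop : K ≠ ⊤ := by
    apply ENNReal.mul_ne_top
    · simp [hLpos]
    · exact measure_ball_lt_top.ne
  have hvol : ∀ δ > 0, volume {x | x ∈ A ∧ |f x| < c * (δ/2)^k} ≤
      ENNReal.ofReal (2*(2^k-1)*δ) * K := by
    intro δ hδ
    have := aux_fubini {x | x ∈ A ∧ |f x| < c * (δ/2)^k} (Metric.ball x₀ (2 * R / 3)) (hEm _)
      measurableSet_ball v L (ENNReal.ofReal (2*(2^k-1)*δ)) ?_ ?_
    · rw [hK, mul_left_comm, mul_comm (ENNReal.ofReal L)⁻¹, ← div_eq_mul_inv]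
      rw [ENNReal.le_div_iff_mul_le (Or.inl (by simpa using hLpos)) (Or.inl (by simp))]
      rwa [mul_comm (volume _)]
    · intro x
      by_cases hx : dist x x₀ < 2 * R / 3
      · have hin : ∀ t ∈ Set.Icc (0:ℝ) L, x + t • v ∈ Metric.ball x₀ R := by
          intro t ht
          have h1 : dist (x + t • v) x ≤ R / 3 := by
            rw [dist_eq_norm, add_sub_cancel_left, norm_smul, Real.norm_eq_abs,
              abs_of_nonneg ht.1]
            exact le_trans (mul_le_mul_of_nonneg_right ht.2 (norm_nonneg _)) hLv
          have := dist_triangle (x + t • v) x x₀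
          rw [Metric.mem_ball]; linarith
        refine le_trans (measure_mono ?_) (aux_sublevel k (fun i t => auxDir f v i (x + t • v))
          0 L c δ hc hδ (fun i t ht => auxDir_hasDerivAt hf v i x t (hball _ (hin t ht)).1)
          (fun t ht => (hball _ (hin t ht)).2.1.le))
        rintro t ⟨ht, ht2⟩
        exact ⟨ht, ht2.2⟩
      · have : {t : ℝ | t ∈ Set.Icc 0 L ∧ x + t • v ∈ {x | x ∈ A ∧ |f x| < c * (δ/2)^k}} = ∅ := by
          ext t
          simp only [Set.mem_ofPred_eq, Set.mem_empty_iff_false, iff_false]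
          rintro ⟨ha, hb⟩
          exact hx (hstep x t ha hb.1)
        rw [this]; simp
    · intro x t ht hx
      exact hstep x t ht hx.1
  refine ⟨A, Metric.ball_mem_nhds _ (by positivity), ?_⟩
  have hAm : MeasurableSet A := measurableSet_ball
  have hfm : AEMeasurable f (volume.restrict A) := hfcont.aemeasurable hAm
  have hlogm : AEMeasurable (fun x => Real.log |f x|) (volume.restrict A) :=
    Real.measurable_log.comp_aemeasurable (continuous_abs.measurable.comp_aemeasurable hfm)
  set u : EuclideanSpace ℝ (Fin D) → ℝ := fun x => max 0 (Real.log c - Real.log |f x|) with hu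
  have hum : AEMeasurable u (volume.restrict A) :=
    aemeasurable_const.max (aemeasurable_const.sub hlogm)
  have hu0 : ∀ x, 0 ≤ u x := fun x => le_max_left _ _
  have huint : Integrable u (volume.restrict A) := by
    refine ⟨hum.aestronglyMeasurable, ?_⟩
    rw [hasFiniteIntegral_iff_ofReal (Filter.Eventually.of_forall hu0),
      lintegral_eq_lintegral_meas_lt _ (Filter.Eventually.of_forall hu0) hum]
    have hb : (0:ℝ) < 1 / (k + 1) := by positivity
    have hexp := exp_neg_integrableOn_Ioi 0 hb
    have hpt : ∀ s ∈ Set.Ioi (0:ℝ), (volume.restrict A) {x | s < u x} ≤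
        ENNReal.ofReal (Real.exp (-(1 / ((k:ℝ) + 1)) * s)) * (ENNReal.ofReal (2*(2^k-1)*2) * K) := by
      intro s hs
      have hs : 0 < s := hs
      have hk1 : (0:ℝ) ≤ 2^k - 1 := sub_nonneg.mpr (one_le_pow₀ (by norm_num))
      have h := hvol (2 * Real.exp (-(1 / ((k:ℝ) + 1)) * s)) (by positivity)
      have e : (2*((2:ℝ)^k-1)*(2 * Real.exp (-(1 / ((k:ℝ) + 1)) * s))) =
        Real.exp (-(1 / ((k:ℝ) + 1)) * s) * (2*(2^k-1)*2) := by ring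
      rw [e, ENNReal.ofReal_mul (Real.exp_pos _).le, mul_assoc] at h
      refine le_trans ?_ h
      rw [Measure.restrict_apply' hAm]
      apply measure_mono
      rintro x ⟨hx, hxA⟩
      refine ⟨hxA, ?_⟩
      have hx : s < u x := hx
      have hx2 : s < Real.log c - Real.log |f x| := by
        rcases lt_max_iff.mp hx with h | h
        · linarith
        · exact h
      have hexpk : Real.exp (-s) ≤ (2 * Real.exp (-(1 / ((k:ℝ) + 1)) * s) / 2)^k := by
        rw [mul_div_cancel_left₀ _ (two_ne_zero), ← Real.exp_nat_mul]
        apply Real.exp_le_exp.mpr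
        have : (k:ℝ) * (1 / (k+1)) ≤ 1 := by
          rw [mul_one_div, div_le_one (by positivity)]; linarith
        nlinarith
      refine lt_of_lt_of_le ?_ (mul_le_mul_of_nonneg_left hexpk hc.le)
      rcases (abs_nonneg (f x)).eq_or_lt with h0 | h0
      · rw [← h0]; positivity
      · have : Real.log |f x| < Real.log (c * Real.exp (-s)) := by
          rw [Real.log_mul hc.ne' (Real.exp_pos _).ne', Real.log_exp]; linarith
        exact (Real.log_lt_log_iff h0 (by positivity)).mp this
    refine lt_of_le_of_lt (setLIntegral_mono' measurableSet_Ioi hpt) ?_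
    rw [lintegral_mul_const' _ _ (ENNReal.mul_ne_top ENNReal.ofReal_ne_top hKtop)]
    apply ENNReal.mul_lt_top _ (ENNReal.mul_lt_top ENNReal.ofReal_lt_top hKtop.lt_top)
    exact (hasFiniteIntegral_iff_ofReal
      (Filter.Eventually.of_forall fun _ => (Real.exp_pos _).le)).mp hexp.2
  have hconst : Integrable (fun _ : EuclideanSpace ℝ (Fin D) => |Real.log c| + Real.log M)
      (volume.restrict A) := by
    have : IsFiniteMeasure (volume.restrict A) := ⟨by
      rw [Measure.restrict_apply_univ]; exact measure_ball_lt_top⟩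
    exact integrable_const _
  refine (huint.add hconst).mono' (continuous_abs.measurable.comp_aemeasurable hlogm).aestronglyMeasurable ?_
  filter_upwards [ae_restrict_mem hAm] with x hx
  have hfx := (hball x (Metric.ball_subset_ball (by linarith) hx)).2.2
  have hlogM : 0 ≤ Real.log M := Real.log_nonneg hM1
  have hup : Real.log |f x| ≤ Real.log M := by
    rcases (abs_nonneg (f x)).eq_or_lt with h0 | h0
    · rw [← h0]; simpa using hlogM
    · exact Real.log_le_log h0 hfx.le
  have h1 : Real.log c - Real.log |f x| ≤ u x := le_max_right _ _
  have h2 := hu0 x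
  simp only [Pi.add_apply, Real.norm_eq_abs, abs_abs]
  rw [abs_le]
  constructor
  · linarith [neg_abs_le (Real.log c)]
  · linarith [abs_nonneg (Real.log c)]

theorem statement0 {D : ℕ} {Ω : Set (EuclideanSpace ℝ (Fin D))}
    (hΩopen : IsOpen Ω) (hΩconn : IsConnected Ω)
    {f : EuclideanSpace ℝ (Fin D) → ℝ} (hf : AnalyticOnNhd ℝ f Ω)
    (hne : ∃ x ∈ Ω, f x ≠ 0)
    {Δ : Set (EuclideanSpace ℝ (Fin D))} (hΔ : IsCompact Δ) (hΔΩ : Δ ⊆ Ω) :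
    IntegrableOn (fun x => |Real.log (|f x|)|) Δ volume ∧
      ∫⁻ x in Δ, ENNReal.ofReal |Real.log (|f x|)| < ⊤ := by
  have h : IntegrableOn (fun x => |Real.log (|f x|)|) Δ volume := by
    apply LocallyIntegrableOn.integrableOn_isCompact _ hΔ
    intro x hx
    exact (aux_local hΩopen hΩconn hf hne x (hΔΩ hx)).filter_mono nhdsWithin_le_nhds
  exact ⟨h, (hasFiniteIntegral_iff_ofReal (Filter.Eventually.of_forall fun _ => abs_nonneg _)).mp h.2⟩
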